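/- arXiv:2312.10598 — 3 statements merged into one kernel-verified Lean document; each statement's English description precedes it below -/
import Mathlib

section
/- Let E and F be real normed vector spaces, let U ⊆ E be an open convex set containing 0, and let f : E → F be twice continuously differentiable on U with f(0) = 0 and Df(0) = 0, and suppose the second differential is K-Lipschitz on U, i.e., ‖D²f(a) − D²f(b)‖ ≤ K‖a − b‖ for all a, b ∈ U (operator norm). Then for all x, y ∈ E such that tx ∈ U and tx + y ∈ U for every t ∈ [0, 1], one has ‖f(x + y) − f(y) − Df(y)(x) − f(x)‖ ≤ (K/2)‖x‖²‖y‖. -/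
/-!
The quantity to be bounded is the first-order Taylor remainder at `0`, in the direction `x`, of the
increment `Δ_[y] f z = f (z + y) - f z`. The second derivative of this increment at `z` is
`D²f (z + y) - D²f z`, which has norm at most `K * ‖y‖`.
-/

open Set AffineMap
open scoped fwdDiff

theorem hasFDerivWithinAt_fwdDiff {𝕜 E F : Type*} [NontriviallyNormedField 𝕜]
    [NormedAddCommGroup E] [NormedSpace 𝕜 E] [NormedAddCommGroup F] [NormedSpace 𝕜 F]
    {f : E → F} {f' : E → E →L[𝕜] F} {s U : Set E} {v z : E}
    (hf : HasFDerivWithinAt f (f' z) U z) (hfv : HasFDerivWithinAt f (f' (z + v)) U (z + v))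
    (hs : s ⊆ U) (hsv : MapsTo (· + v) s U) :
    HasFDerivWithinAt (Δ_[v] f) (Δ_[v] f' z) s z :=
  (hfv.comp z ((hasFDerivWithinAt_id z s).add_const v) hsv).sub (hf.mono hs)

section TaylorRemainder

variable {E F : Type*} [NormedAddCommGroup E] [NormedSpace ℝ E]
  [NormedAddCommGroup F] [NormedSpace ℝ F]
  {f : E → F} {f' : E → E →L[ℝ] F} {s : Set E} {a b : E} {C : ℝ}

theorem hasDerivWithinAt_taylorRemainder_lineMap {t : ℝ}
    (hs : segment ℝ a b ⊆ s)
    (hf : HasFDerivWithinAt f (f' (lineMap a b t)) s (lineMap a b t)) :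
    HasDerivWithinAt (fun t : ℝ ↦ f (lineMap a b t) - f a - t • f' a (b - a))
      ((f' (lineMap a b t) - f' a) (b - a)) (Icc 0 1) t := by
  have maps_segment : MapsTo (lineMap a b) (Icc (0 : ℝ) 1) s := fun _ hr ↦
    hs (lineMap_mem_segment ℝ a b hr)
  have hline := hf.comp_hasDerivWithinAt t hasDerivWithinAt_lineMap maps_segment
  have hlinear := (hasDerivWithinAt_id t (Icc (0 : ℝ) 1)).smul_const (f' a (b - a))
  exact ((hline.sub_const (f a)).sub hlinear).congr_deriv (by simp only [one_smul, sub_apply])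

theorem norm_taylorRemainder_le_of_norm_fderiv_sub_le
    (hs : segment ℝ a b ⊆ s) (hf : ∀ z ∈ s, HasFDerivWithinAt f (f' z) s z)
    (hC : ∀ z ∈ s, ‖f' z - f' a‖ ≤ C * ‖z - a‖) :
    ‖f b - f a - f' a (b - a)‖ ≤ C / 2 * ‖b - a‖ ^ 2 := by
  have mem_s {t : ℝ} (ht : t ∈ Icc (0 : ℝ) 1) : lineMap a b t ∈ s :=
    hs (lineMap_mem_segment ℝ a b ht)
  let g : ℝ → F := fun t ↦ f (lineMap a b t) - f a - t • f' a (b - a)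
  let g' : ℝ → F := fun t ↦ (f' (lineMap a b t) - f' a) (b - a)
  have hg (t : ℝ) (ht : t ∈ Icc (0 : ℝ) 1) : HasDerivWithinAt g (g' t) (Icc 0 1) t :=
    hasDerivWithinAt_taylorRemainder_lineMap hs (hf _ (mem_s ht))
  have hg_right (t : ℝ) (ht : t ∈ Ico (0 : ℝ) 1) : HasDerivWithinAt g (g' t) (Ici t) t :=
    (hg t (Ico_subset_Icc_self ht)).mono_of_mem_nhdsWithin (Icc_mem_nhdsGE_of_mem ht)
  have norm_g'_le (t : ℝ) (ht : t ∈ Ico (0 : ℝ) 1) : ‖g' t‖ ≤ C * ‖b - a‖ ^ 2 * t :=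
    calc
      ‖g' t‖ ≤ ‖f' (lineMap a b t) - f' a‖ * ‖b - a‖ := ContinuousLinearMap.le_opNorm _ _
      _ ≤ C * ‖lineMap a b t - a‖ * ‖b - a‖ := by
        gcongr
        exact hC _ (mem_s (Ico_subset_Icc_self ht))
      _ = C * ‖b - a‖ ^ 2 * t := by
        rw [← vsub_eq_sub, lineMap_vsub_left, vsub_eq_sub, norm_smul, Real.norm_of_nonneg ht.1]
        ring
  have hB (t : ℝ) :
      HasDerivAt (fun t ↦ C / 2 * ‖b - a‖ ^ 2 * t ^ 2) (C * ‖b - a‖ ^ 2 * t) t :=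
    ((hasDerivAt_pow 2 t).const_mul _).congr_deriv (by norm_num; ring)
  simpa [g] using image_norm_le_of_norm_deriv_right_le_deriv_boundary
    (fun t ht ↦ (hg t ht).continuousWithinAt) hg_right (by simp [g]) hB norm_g'_le
    (right_mem_Icc.2 zero_le_one)

theorem norm_taylorRemainder_le_of_norm_fderiv₂_le {f'' : E → E →L[ℝ] E →L[ℝ] F}
    (hs : Convex ℝ s) (ha : a ∈ s) (hb : b ∈ s)
    (hf : ∀ z ∈ s, HasFDerivWithinAt f (f' z) s z)
    (hf' : ∀ z ∈ s, HasFDerivWithinAt f' (f'' z) s z) (hC : ∀ z ∈ s, ‖f'' z‖ ≤ C) :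
    ‖f b - f a - f' a (b - a)‖ ≤ C / 2 * ‖b - a‖ ^ 2 :=
  norm_taylorRemainder_le_of_norm_fderiv_sub_le (hs.segment_subset ha hb) hf fun _ hz ↦
    hs.norm_image_sub_le_of_norm_hasFDerivWithin_le hf' hC ha hz

theorem norm_taylorRemainder_fwdDiff_le {U : Set E} {f'' : E → E →L[ℝ] E →L[ℝ] F} {K : ℝ} {v : E}
    (hf : ∀ z ∈ U, HasFDerivWithinAt f (f' z) U z)
    (hf' : ∀ z ∈ U, HasFDerivWithinAt f' (f'' z) U z)
    (hLip : ∀ z ∈ U, ∀ w ∈ U, ‖f'' z - f'' w‖ ≤ K * ‖z - w‖)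
    (hs : Convex ℝ s) (ha : a ∈ s) (hb : b ∈ s) (hsU : s ⊆ U) (hsv : MapsTo (· + v) s U) :
    ‖Δ_[v] f b - Δ_[v] f a - Δ_[v] f' a (b - a)‖ ≤ K / 2 * ‖b - a‖ ^ 2 * ‖v‖ := by
  have hΔf (z : E) (hz : z ∈ s) : HasFDerivWithinAt (Δ_[v] f) (Δ_[v] f' z) s z :=
    hasFDerivWithinAt_fwdDiff (hf z (hsU hz)) (hf (z + v) (hsv hz)) hsU hsv
  have hΔf' (z : E) (hz : z ∈ s) : HasFDerivWithinAt (Δ_[v] f') (Δ_[v] f'' z) s z :=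
    hasFDerivWithinAt_fwdDiff (hf' z (hsU hz)) (hf' (z + v) (hsv hz)) hsU hsv
  have norm_Δf''_le (z : E) (hz : z ∈ s) : ‖Δ_[v] f'' z‖ ≤ K * ‖v‖ := by
    simpa only [fwdDiff, add_sub_cancel_left] using hLip (z + v) (hsv hz) z (hsU hz)
  calc
    _ ≤ K * ‖v‖ / 2 * ‖b - a‖ ^ 2 :=
      norm_taylorRemainder_le_of_norm_fderiv₂_le hs ha hb hΔf hΔf' norm_Δf''_le
    _ = K / 2 * ‖b - a‖ ^ 2 * ‖v‖ := by ring

end TaylorRemainder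

theorem second_deriv_lipschitz_taylor_bound_general
    {E F : Type*} [NormedAddCommGroup E] [NormedSpace ℝ E]
    [NormedAddCommGroup F] [NormedSpace ℝ F]
    {U : Set E} {f : E → F} {f' : E → E →L[ℝ] F} {f'' : E → E →L[ℝ] E →L[ℝ] F} {K : ℝ}
    (hf' : ∀ z ∈ U, HasFDerivWithinAt f (f' z) U z)
    (hf'' : ∀ z ∈ U, HasFDerivWithinAt f' (f'' z) U z)
    (hLip : ∀ z ∈ U, ∀ w ∈ U, ‖f'' z - f'' w‖ ≤ K * ‖z - w‖)
    (a x y : E) (hseg : ∀ t ∈ Icc (0 : ℝ) 1, a + t • x ∈ U ∧ a + t • x + y ∈ U) :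
    ‖(f (a + x + y) - f (a + y) - f' (a + y) x) - (f (a + x) - f a - f' a x)‖ ≤
      K / 2 * ‖x‖ ^ 2 * ‖y‖ := by
  have hsegment (z : E) (hz : z ∈ segment ℝ a (a + x)) : z ∈ U ∧ z + y ∈ U := by
    obtain ⟨t, ht, rfl⟩ := (segment_eq_image' ℝ a (a + x)).subset hz
    simpa only [add_sub_cancel_left] using hseg t ht
  have hremainder := norm_taylorRemainder_fwdDiff_le hf' hf'' hLip (convex_segment a (a + x))
    (left_mem_segment ℝ a (a + x)) (right_mem_segment ℝ a (a + x))
    (fun z hz ↦ (hsegment z hz).1) (fun z hz ↦ (hsegment z hz).2)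
  simp only [fwdDiff, add_sub_cancel_left, sub_apply] at hremainder
  convert hremainder using 2
  abel

/-- if f is twice continuously differentiable on an open convex
    set U containing 0, with f(0) = 0, Df(0) = 0, and K-Lipschitz second
    differential on U, then for x, y with the segments tx and tx + y (t ∈ [0,1])
    inside U, one has ‖f(x+y) − f(y) − Df(y)(x) − f(x)‖ ≤ (K/2)‖x‖²‖y‖. -/
theorem second_deriv_lipschitz_taylor_bound
    {E F : Type*} [NormedAddCommGroup E] [NormedSpace ℝ E]
    [NormedAddCommGroup F] [NormedSpace ℝ F]
    (U : Set E) (hU : IsOpen U) (hUconv : Convex ℝ U) (hU0 : (0 : E) ∈ U)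
    (f : E → F) (f' : E → E →L[ℝ] F) (f'' : E → E →L[ℝ] E →L[ℝ] F) (K : ℝ)
    (hK : 0 ≤ K)
    (hf' : ∀ a ∈ U, HasFDerivAt f (f' a) a)
    (hf'' : ∀ a ∈ U, HasFDerivAt f' (f'' a) a)
    (hf'cont : ContinuousOn f'' U)
    (hf0 : f 0 = 0) (hf'0 : f' 0 = 0)
    (hLip : ∀ a ∈ U, ∀ b ∈ U, ‖f'' a - f'' b‖ ≤ K * ‖a - b‖)
    (x y : E)
    (hseg : ∀ t ∈ Set.Icc (0 : ℝ) 1, t • x ∈ U ∧ t • x + y ∈ U) :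
    ‖f (x + y) - f y - f' y x - f x‖ ≤ (K / 2) * ‖x‖ ^ 2 * ‖y‖ := by
  simpa [hf0, hf'0] using second_deriv_lipschitz_taylor_bound_general
    (fun z hz ↦ (hf' z hz).hasFDerivWithinAt) (fun z hz ↦ (hf'' z hz).hasFDerivWithinAt) hLip
    0 x y (by simpa using hseg)
end

section
/- Let X and Y be linear subspaces of ℝⁿ with dim X = dim Y. Define δ(X, Y) = sup{ dist(x, Y) : x ∈ X, ‖x‖ ≤ 1 }. Then δ(X, Y) = δ(Y, X). -/
/-!
The gap δ(X, Y) is the operator norm of the projection onto Yᗮ restricted to X. By Pythagoras,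
δ(X, Y) ≤ d says exactly that the orthogonal projection X → Y is bounded below by √(1 - d²). The
orthogonal projection Y → X is its adjoint, and the adjoint of a surjective operator inherits its
lower bounds. If δ(X, Y) < 1 then X → Y is injective, hence surjective when the dimensions agree;
otherwise δ(Y, X) ≤ 1 ≤ δ(X, Y).
-/

open Function Metric

section LowerBound

variable {𝕜 E F : Type*} [RCLike 𝕜]
  [NormedAddCommGroup E] [InnerProductSpace 𝕜 E] [CompleteSpace E]
  [NormedAddCommGroup F] [InnerProductSpace 𝕜 F] [CompleteSpace F]

theorem mul_norm_le_norm_adjoint_apply {T : E →L[𝕜] F} (hsurj : Surjective T) {c : ℝ} (hc : 0 ≤ c)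
    (hT : ∀ x, c * ‖x‖ ≤ ‖T x‖) (y : F) : c * ‖y‖ ≤ ‖T.adjoint y‖ := by
  obtain ⟨x, rfl⟩ := hsurj y
  rcases (norm_nonneg (T x)).eq_or_lt with hzero | hpos
  · simp [← hzero]
  have hinner : ‖T x‖ ^ 2 ≤ ‖T.adjoint (T x)‖ * ‖x‖ := by
    rw [← ContinuousLinearMap.comp_apply, ContinuousLinearMap.apply_norm_sq_eq_inner_adjoint_left]
    exact re_inner_le_norm _ _
  refine le_of_mul_le_mul_right ?_ hpos
  calc c * ‖T x‖ * ‖T x‖ = c * ‖T x‖ ^ 2 := by ring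
    _ ≤ c * (‖T.adjoint (T x)‖ * ‖x‖) := by gcongr
    _ = ‖T.adjoint (T x)‖ * (c * ‖x‖) := by ring
    _ ≤ ‖T.adjoint (T x)‖ * ‖T x‖ := by gcongr; exact hT x

end LowerBound

section Gap

variable {𝕜 E : Type*} [RCLike 𝕜] [NormedAddCommGroup E] [InnerProductSpace 𝕜 E]

theorem infDist_eq_norm_starProjection_orthogonal (Y : Submodule 𝕜 E) [Y.HasOrthogonalProjection]
    (x : E) : infDist x (Y : Set E) = ‖Yᗮ.starProjection x‖ := by
  rw [Submodule.starProjection_orthogonal_val, Submodule.starProjection_minimal,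
    infDist_eq_iInf]
  simp only [dist_eq_norm]
  rfl

/-- The gap `δ(X, Y) = sup {dist(x, Y) : x ∈ X, ‖x‖ ≤ 1}` between two subspaces. This one-sided
quantity is not symmetric in general, e.g. for `X < Y`. -/
noncomputable def subspaceGap (X Y : Submodule 𝕜 E) : ℝ :=
  sSup ((fun x => infDist x (Y : Set E)) '' {x : E | x ∈ X ∧ ‖x‖ ≤ 1})

/-- The orthogonal projection onto `Y` restricted to a map `X → Y`; its singular values are the
cosines of the principal angles between `X` and `Y`. -/
noncomputable def projectionBetween (X Y : Submodule 𝕜 E) [Y.HasOrthogonalProjection] :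
    X →L[𝕜] Y :=
  Y.orthogonalProjectionOnto ∘L X.subtypeL

theorem adjoint_projectionBetween (X Y : Submodule 𝕜 E) [CompleteSpace X] [CompleteSpace Y] :
    (projectionBetween X Y).adjoint = projectionBetween Y X := by
  refine ((ContinuousLinearMap.eq_adjoint_iff _ _).2 fun y x => ?_).symm
  exact (X.inner_orthogonalProjectionOnto_eq_of_mem_right x y).trans
    (Y.inner_orthogonalProjectionOnto_eq_of_mem_left y x).symm

theorem subspaceGap_eq_opNorm (X Y : Submodule 𝕜 E) [Y.HasOrthogonalProjection] :
    subspaceGap X Y = ‖Yᗮ.starProjection ∘L X.subtypeL‖ := by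
  rw [← ContinuousLinearMap.sSup_unitClosedBall_eq_norm, subspaceGap]
  congr 1
  ext r
  simp [infDist_eq_norm_starProjection_orthogonal, and_assoc, and_left_comm]

theorem subspaceGap_nonneg (X Y : Submodule 𝕜 E) [Y.HasOrthogonalProjection] :
    0 ≤ subspaceGap X Y := by
  rw [subspaceGap_eq_opNorm]
  exact norm_nonneg _

theorem subspaceGap_le_iff {X Y : Submodule 𝕜 E} [Y.HasOrthogonalProjection] {d : ℝ}
    (hd : 0 ≤ d) :
    subspaceGap X Y ≤ d ↔ ∀ x : X, √(1 - d ^ 2) * ‖x‖ ≤ ‖projectionBetween X Y x‖ := by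
  rw [subspaceGap_eq_opNorm, ContinuousLinearMap.opNorm_le_iff hd]
  refine forall_congr' fun x => ?_
  have pythagoras : ‖x‖ ^ 2 = ‖projectionBetween X Y x‖ ^ 2 + ‖Yᗮ.starProjection (x : E)‖ ^ 2 :=
    Y.norm_sq_eq_add_norm_sq_starProjection (x : E)
  calc ‖Yᗮ.starProjection (x : E)‖ ≤ d * ‖x‖
      ↔ ‖Yᗮ.starProjection (x : E)‖ ^ 2 ≤ (d * ‖x‖) ^ 2 :=
        (sq_le_sq₀ (norm_nonneg _) (by positivity)).symm
    _ ↔ (1 - d ^ 2) * ‖x‖ ^ 2 ≤ ‖projectionBetween X Y x‖ ^ 2 := by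
        constructor <;> intro h <;> linarith
    _ ↔ √(1 - d ^ 2) * ‖x‖ ≤ ‖projectionBetween X Y x‖ := by
        rw [← Real.sqrt_le_left (norm_nonneg _), Real.sqrt_mul' _ (sq_nonneg _),
          Real.sqrt_sq (norm_nonneg _)]

theorem subspaceGap_le_one (X Y : Submodule 𝕜 E) [Y.HasOrthogonalProjection] :
    subspaceGap X Y ≤ 1 := by
  simp [subspaceGap_le_iff zero_le_one]

theorem projectionBetween_injective_of_subspaceGap_lt_one {X Y : Submodule 𝕜 E}
    [Y.HasOrthogonalProjection] (h : subspaceGap X Y < 1) :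
    Injective (projectionBetween X Y) := by
  refine (injective_iff_map_eq_zero _).2 fun x hx => ?_
  have hpos : 0 < √(1 - subspaceGap X Y ^ 2) :=
    Real.sqrt_pos.2 (sub_pos.2 (pow_lt_one₀ (subspaceGap_nonneg X Y) h two_ne_zero))
  have hle := (subspaceGap_le_iff (subspaceGap_nonneg X Y)).1 le_rfl x
  rw [hx, norm_zero] at hle
  exact norm_le_zero_iff.1 (nonpos_of_mul_nonpos_right hle hpos)

theorem subspaceGap_swap_le_of_surjective {X Y : Submodule 𝕜 E} [CompleteSpace X] [CompleteSpace Y]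
    (hsurj : Surjective (projectionBetween X Y)) : subspaceGap Y X ≤ subspaceGap X Y := by
  have hd := subspaceGap_nonneg X Y
  rw [subspaceGap_le_iff hd, ← adjoint_projectionBetween X Y]
  exact mul_norm_le_norm_adjoint_apply hsurj (Real.sqrt_nonneg _) ((subspaceGap_le_iff hd).1 le_rfl)

theorem subspaceGap_swap_le_of_finrank_eq {X Y : Submodule 𝕜 E} [FiniteDimensional 𝕜 X]
    [FiniteDimensional 𝕜 Y] (hdim : Module.finrank 𝕜 X = Module.finrank 𝕜 Y) :
    subspaceGap Y X ≤ subspaceGap X Y := by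
  have := FiniteDimensional.complete 𝕜 X
  have := FiniteDimensional.complete 𝕜 Y
  rcases lt_or_ge (subspaceGap X Y) 1 with hlt | hge
  · have hinj : Injective (projectionBetween X Y).toLinearMap :=
      projectionBetween_injective_of_subspaceGap_lt_one hlt
    exact subspaceGap_swap_le_of_surjective
      ((LinearMap.injective_iff_surjective_of_finrank_eq_finrank hdim).1 hinj)
  · exact (subspaceGap_le_one Y X).trans hge

theorem subspace_gap_symm_general {X Y : Submodule 𝕜 E} [FiniteDimensional 𝕜 X]
    [FiniteDimensional 𝕜 Y] (hdim : Module.finrank 𝕜 X = Module.finrank 𝕜 Y) :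
    subspaceGap X Y = subspaceGap Y X :=
  le_antisymm (subspaceGap_swap_le_of_finrank_eq hdim.symm) (subspaceGap_swap_le_of_finrank_eq hdim)

end Gap

/-- for linear subspaces X, Y of ℝⁿ of the same dimension,
    δ(X, Y) = sup{ dist(x, Y) : x ∈ X, ‖x‖ ≤ 1 } is symmetric. -/
theorem subspace_gap_symm {n : ℕ}
    (X Y : Submodule ℝ (EuclideanSpace ℝ (Fin n)))
    (hdim : Module.finrank ℝ X = Module.finrank ℝ Y) :
    sSup ((fun x => Metric.infDist x (Y : Set (EuclideanSpace ℝ (Fin n)))) ''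
        {x : EuclideanSpace ℝ (Fin n) | x ∈ X ∧ ‖x‖ ≤ 1}) =
    sSup ((fun y => Metric.infDist y (X : Set (EuclideanSpace ℝ (Fin n)))) ''
        {y : EuclideanSpace ℝ (Fin n) | y ∈ Y ∧ ‖y‖ ≤ 1}) :=
  subspace_gap_symm_general hdim
end

section
/- Let σ, τ, δ, Γ, κ₀, κ₁ be positive real numbers with κ₀ ≤ κ₁ and Γ·κ₁ < 1, and suppose σ·log(κ₁/κ₀) ≤ δτ·√(2·log(1/(Γ·κ₁))). Then √(2σ²·log(1/(Γ·κ₀))) − (−δτ + √(2σ²·log(1/(Γ·κ₁)))) ≤ 2τδ. -/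
/-!
Writing `L = log (1 / (Γκ₁))` and `D = log (κ₁ / κ₀)`, one has `log (1 / (Γκ₀)) = L + D`. The
hypothesis bounds the increment `2σ²D` by the cross term of `(√(2σ²L) + δτ)²`, so replacing `L` by
`L + D` raises the square root by at most `δτ`; the shift `-δτ` in the lower estimate contributes
the other `δτ`.
-/

theorem sqrt_add_le_sqrt_add_iff {x y c : ℝ} (hx : 0 ≤ x) (hc : 0 ≤ c) :
    √(x + y) ≤ √x + c ↔ y ≤ 2 * √x * c + c ^ 2 := by
  rw [Real.sqrt_le_left (by positivity), add_sq, Real.sq_sqrt hx, add_assoc, add_le_add_iff_left]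

theorem sqrt_two_mul_sq_mul_add_le {σ c L D : ℝ} (hσ : 0 ≤ σ) (hc : 0 ≤ c) (hL : 0 ≤ L)
    (h : σ * D ≤ c * √(2 * L)) :
    √(2 * σ ^ 2 * (L + D)) ≤ √(2 * σ ^ 2 * L) + c := by
  have sqrt_eq : √(2 * σ ^ 2 * L) = σ * √(2 * L) := by
    rw [mul_right_comm, mul_comm, Real.sqrt_mul (sq_nonneg σ), Real.sqrt_sq hσ]
  have increment_le : 2 * σ ^ 2 * D ≤ 2 * √(2 * σ ^ 2 * L) * c :=
    calc 2 * σ ^ 2 * D = 2 * σ * (σ * D) := by ring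
      _ ≤ 2 * σ * (c * √(2 * L)) := by gcongr
      _ = 2 * √(2 * σ ^ 2 * L) * c := by rw [sqrt_eq]; ring
  rw [mul_add, sqrt_add_le_sqrt_add_iff (by positivity) hc]
  exact increment_le.trans (le_add_of_nonneg_right (sq_nonneg c))

theorem log_one_div_mul_eq_add_log_div {a b c : ℝ} (ha : a ≠ 0) (hb : b ≠ 0) (hc : c ≠ 0) :
    Real.log (1 / (a * b)) = Real.log (1 / (a * c)) + Real.log (c / b) := by
  rw [← Real.log_mul (by positivity) (by positivity)]
  congr 1
  field_simp

/-- the Gap bound. If σ·log(κ₁/κ₀) ≤ δτ·√(2·log(1/(Γκ₁))), then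
    √(2σ²·log(1/(Γκ₀))) − (−δτ + √(2σ²·log(1/(Γκ₁)))) ≤ 2τδ. -/
theorem gap_bound (σ τ δ Γ κ₀ κ₁ : ℝ)
    (hσ : 0 < σ) (hτ : 0 < τ) (hδ : 0 < δ) (hΓ : 0 < Γ)
    (hκ₀ : 0 < κ₀) (hκ₁ : 0 < κ₁) (hκ : κ₀ ≤ κ₁) (hΓκ₁ : Γ * κ₁ < 1)
    (hcond : σ * Real.log (κ₁ / κ₀) ≤
      δ * τ * Real.sqrt (2 * Real.log (1 / (Γ * κ₁)))) :
    Real.sqrt (2 * σ ^ 2 * Real.log (1 / (Γ * κ₀))) -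
      (-(δ * τ) + Real.sqrt (2 * σ ^ 2 * Real.log (1 / (Γ * κ₁)))) ≤ 2 * τ * δ := by
  have log_nonneg : 0 ≤ Real.log (1 / (Γ * κ₁)) :=
    Real.log_nonneg (one_le_one_div (by positivity) hΓκ₁.le)
  have sqrt_le := sqrt_two_mul_sq_mul_add_le hσ.le (by positivity) log_nonneg hcond
  rw [← log_one_div_mul_eq_add_log_div hΓ.ne' hκ₀.ne' hκ₁.ne'] at sqrt_le
  linarith
end
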